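/- Let n ≥ 1, let x ∈ (0,1), and let ρ₁, ρ₂ be density matrices (n×n complex positive semidefinite matrices of trace 1), and set ρ_Av := x·ρ₁ + (1−x)·ρ₂. Then S(ρ_Av) − x·S(ρ₁) − (1−x)·S(ρ₂) ≤ h(x), where h(x) = −x·log x − (1−x)·log(1−x) is the binary entropy. -/

import Mathlib

open Matrix ComplexOrder

/-- Apply a real function to a Hermitian matrix via the spectral decomposition
`A = U D U*`: the result is `U (f(D)) U*` where `f` acts on the diagonal. -/
noncomputable def mfun {m : Type*} [Fintype m] [DecidableEq m]
    (f : ℝ → ℝ) (A : Matrix m m ℂ) : Matrix m m ℂ :=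
  if hA : A.IsHermitian then hA.cfc f else 0

/-- Matrix logarithm via spectral decomposition, with the convention `log 0 = 0`
(note `Real.log 0 = 0`). -/
noncomputable def matLog {m : Type*} [Fintype m] [DecidableEq m]
    (A : Matrix m m ℂ) : Matrix m m ℂ :=
  mfun Real.log A

/-- The positive semidefinite square root of a positive semidefinite matrix,
via spectral decomposition. -/
noncomputable def matSqrt {m : Type*} [Fintype m] [DecidableEq m]
    (A : Matrix m m ℂ) : Matrix m m ℂ :=
  mfun Real.sqrt A

/-- Real power of a (positive semidefinite / positive definite) matrix via spectral
decomposition. -/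
noncomputable def matRpow {m : Type*} [Fintype m] [DecidableEq m]
    (t : ℝ) (A : Matrix m m ℂ) : Matrix m m ℂ :=
  mfun (fun u => u ^ t) A

/-- The von Neumann entropy `S(ρ) = -Tr(ρ log ρ)`. -/
noncomputable def vnEntropy {m : Type*} [Fintype m] [DecidableEq m]
    (ρ : Matrix m m ℂ) : ℝ :=
  -(Matrix.trace (ρ * matLog ρ)).re

/-- The quantum relative entropy `H(ρ, γ) = Tr(ρ (log ρ - log γ))`. -/
noncomputable def relEntropy {m : Type*} [Fintype m] [DecidableEq m]
    (ρ γ : Matrix m m ℂ) : ℝ :=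
  (Matrix.trace (ρ * (matLog ρ - matLog γ))).re

/-- The trace norm of a Hermitian matrix: the sum of the absolute values of its
eigenvalues. -/
noncomputable def traceNorm {m : Type*} [Fintype m] [DecidableEq m]
    (A : Matrix m m ℂ) : ℝ :=
  if hA : A.IsHermitian then ∑ i, |hA.eigenvalues i| else 0

/-- A density matrix: positive semidefinite with trace 1. -/
def IsDensity {m : Type*} [Fintype m] [DecidableEq m] (ρ : Matrix m m ℂ) : Prop :=
  ρ.PosSemidef ∧ Matrix.trace ρ = 1

/-- The binary entropy `h(x) = -x log x - (1-x) log (1-x)`. -/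
noncomputable def binEntropy (x : ℝ) : ℝ :=
  -(x * Real.log x) - (1 - x) * Real.log (1 - x)

/-- The Renyi relative entropy `H_a(ρ,γ) = (a-1)⁻¹ log Tr(ρ^a γ^(1-a))`. -/
noncomputable def renyiRel {m : Type*} [Fintype m] [DecidableEq m]
    (a : ℝ) (ρ γ : Matrix m m ℂ) : ℝ :=
  (a - 1)⁻¹ * Real.log (Matrix.trace (matRpow a ρ * matRpow (1 - a) γ)).re

/-- The sandwiched Renyi relative entropy
`H̃_a(ρ,γ) = (a-1)⁻¹ log Tr((γ^((1-a)/(2a)) ρ γ^((1-a)/(2a)))^a)`. -/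
noncomputable def sandRenyiRel {m : Type*} [Fintype m] [DecidableEq m]
    (a : ℝ) (ρ γ : Matrix m m ℂ) : ℝ :=
  (a - 1)⁻¹ * Real.log
    (Matrix.trace (matRpow a
      (matRpow ((1 - a) / (2 * a)) γ * ρ * matRpow ((1 - a) / (2 * a)) γ))).re

/-!
The von Neumann entropy is subadditive on the cone of positive semidefinite matrices:
`S(A + B) ≤ S(A) + S(B)`. For positive definite `A` and `B` this is the operator monotonicity of
the logarithm, since `Tr(A log A) ≤ Tr(A log (A + B))` and likewise for `B`; the semidefinite case
follows by perturbing with `ε • 1`, because `S(A + ε • 1) = ∑ i, η(λᵢ + ε)` with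
`η(t) = -t log t` continuous at `0`.
Under scaling, `S(x • A) = x S(A) + η(x) Tr A`, so subadditivity applied to `x • ρ₁` and
`(1 - x) • ρ₂` produces exactly the binary entropy as the error term.
-/

section

open scoped MatrixOrder Matrix.Norms.L2Operator

section Trace

variable {m 𝕜 : Type*} [Fintype m] [RCLike 𝕜] {A B C : Matrix m m 𝕜}

lemma trace_mul_le_trace_mul_of_nonneg_left (hBC : B ≤ C) (hA : 0 ≤ A) :
    (A * B).trace ≤ (A * C).trace := by
  classical
  obtain ⟨X, rfl⟩ := CStarAlgebra.nonneg_iff_eq_star_mul_self.mp hA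
  rw [← sub_nonneg, ← trace_sub, ← mul_sub, mul_assoc, trace_mul_comm]
  exact ((le_iff.mp hBC).mul_mul_conjTranspose_same X).trace_nonneg

variable [DecidableEq m]

lemma trace_cfc_eq_sum_eigenvalues (hA : A.IsHermitian) (f : ℝ → ℝ) :
    (cfc f A).trace = ∑ i, (f (hA.eigenvalues i) : 𝕜) := by
  rw [hA.cfc_eq, IsHermitian.cfc, Unitary.conjStarAlgAut_apply, trace_mul_comm,
    ← mul_assoc, Unitary.coe_star_mul_self, one_mul, trace_diagonal]
  rfl

end Trace

variable {m : Type*} [Fintype m] [DecidableEq m] {A B : Matrix m m ℂ}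

lemma mfun_eq_cfc (f : ℝ → ℝ) (A : Matrix m m ℂ) : mfun f A = cfc f A := by
  by_cases hA : A.IsHermitian
  · rw [mfun, dif_pos hA, hA.cfc_eq]
  · exact (dif_neg hA).trans (cfc_apply_of_not_predicate A hA).symm

lemma matLog_eq_log (A : Matrix m m ℂ) : matLog A = CFC.log A :=
  mfun_eq_cfc Real.log A

lemma vnEntropy_eq_re_trace_cfc (hA : A.IsHermitian) :
    vnEntropy A = (cfc Real.negMulLog A).trace.re := by
  have hmul : A * CFC.log A = cfc (fun t ↦ t * Real.log t) A := by
    rw [cfc_mul (fun t ↦ t) Real.log A (by fun_prop)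
      (A.finite_real_spectrum.continuousOn _), cfc_id' ℝ A hA.isSelfAdjoint, CFC.log]
  rw [vnEntropy, matLog_eq_log, hmul, Real.negMulLog_eq_neg, cfc_neg, trace_neg, Complex.neg_re]

lemma vnEntropy_smul (hA : A.IsHermitian) (x : ℝ) :
    vnEntropy (x • A) = x * vnEntropy A + Real.negMulLog x * A.trace.re := by
  have hA' : IsSelfAdjoint A := hA.isSelfAdjoint
  have hcfc : cfc Real.negMulLog (x • A) =
      Real.negMulLog x • A + x • cfc Real.negMulLog A := by
    rw [← cfc_comp_const_mul x Real.negMulLog A, ← cfc_const_mul_id (Real.negMulLog x) A,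
      ← cfc_const_mul x Real.negMulLog A,
      ← cfc_add A (Real.negMulLog x * ·) (x * Real.negMulLog ·)]
    simp only [Real.negMulLog_mul, mul_comm]
  rw [vnEntropy_eq_re_trace_cfc (hA.smul (.all x)), vnEntropy_eq_re_trace_cfc hA, hcfc,
    trace_add, trace_smul, trace_smul, Complex.add_re, Complex.smul_re,
    Complex.smul_re, smul_eq_mul, smul_eq_mul, add_comm]

lemma vnEntropy_smul_of_isDensity (hA : IsDensity A) (x : ℝ) :
    vnEntropy (x • A) = x * vnEntropy A + Real.negMulLog x := by
  rw [vnEntropy_smul hA.1.isHermitian, hA.2, Complex.one_re, mul_one]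

lemma vnEntropy_add_smul_one (hA : A.IsHermitian) (ε : ℝ) :
    vnEntropy (A + ε • 1) = ∑ i, Real.negMulLog (hA.eigenvalues i + ε) := by
  have hA' : IsSelfAdjoint A := hA.isSelfAdjoint
  have hcfc : cfc Real.negMulLog (A + ε • 1) = cfc (fun t ↦ Real.negMulLog (t + ε)) A := by
    rw [cfc_comp' Real.negMulLog (· + ε) A, cfc_add_const ε (fun t ↦ t) A, cfc_id' ℝ A,
      Algebra.algebraMap_eq_smul_one]
  rw [vnEntropy_eq_re_trace_cfc (hA.add (isHermitian_one.smul (.all ε))), hcfc,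
    trace_cfc_eq_sum_eigenvalues hA, Complex.re_sum]
  rfl

lemma continuous_vnEntropy_add_smul_one (hA : A.IsHermitian) :
    Continuous fun ε : ℝ ↦ vnEntropy (A + ε • 1) := by
  simp only [vnEntropy_add_smul_one hA]
  fun_prop

lemma re_trace_mul_log_self_le (hA : A.PosDef) (hAB : A ≤ B) :
    (A * CFC.log A).trace.re ≤ (A * CFC.log B).trace.re := by
  have hlog : CFC.log A ≤ CFC.log B :=
    CFC.log_le_log hAB (isStrictlyPositive_iff_posDef.mpr hA)
  exact (Complex.le_def.mp
    (trace_mul_le_trace_mul_of_nonneg_left hlog hA.posSemidef.nonneg)).1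

lemma vnEntropy_add_le_of_posDef (hA : A.PosDef) (hB : B.PosDef) :
    vnEntropy (A + B) ≤ vnEntropy A + vnEntropy B := by
  have hleA := re_trace_mul_log_self_le hA (le_add_of_nonneg_right hB.posSemidef.nonneg)
  have hleB := re_trace_mul_log_self_le hB (le_add_of_nonneg_left hA.posSemidef.nonneg)
  simp only [vnEntropy, matLog_eq_log, add_mul, trace_add, Complex.add_re]
  linarith

theorem vnEntropy_add_le (hA : A.PosSemidef) (hB : B.PosSemidef) :
    vnEntropy (A + B) ≤ vnEntropy A + vnEntropy B := by
  have posDef_add_smul_one {C : Matrix m m ℂ} (hC : C.PosSemidef) {ε : ℝ} (hε : 0 < ε) :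
      (C + ε • 1).PosDef :=
    PosDef.posSemidef_add hC (PosDef.one.smul hε)
  have hle : ∀ ε ∈ Set.Ioi (0 : ℝ), vnEntropy (A + B + (2 * ε) • 1) ≤
      vnEntropy (A + ε • 1) + vnEntropy (B + ε • 1) := by
    intro ε hε
    rw [two_mul, add_smul, add_add_add_comm]
    exact vnEntropy_add_le_of_posDef (posDef_add_smul_one hA hε) (posDef_add_smul_one hB hε)
  have hcontA := continuous_vnEntropy_add_smul_one hA.isHermitian
  have hcontB := continuous_vnEntropy_add_smul_one hB.isHermitian
  have hcontAB := continuous_vnEntropy_add_smul_one (hA.add hB).isHermitian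
  have hlimit := le_on_closure hle (hcontAB.comp (continuous_const_mul 2)).continuousOn
    (hcontA.add hcontB).continuousOn (x := 0) (by simp)
  simpa using hlimit

lemma binEntropy_eq_negMulLog_add_negMulLog (x : ℝ) :
    binEntropy x = Real.negMulLog x + Real.negMulLog (1 - x) := by
  simp only [binEntropy, Real.negMulLog]
  ring

end

theorem concavity_upper_bound_binEntropy_general {m : Type*} [Fintype m] [DecidableEq m]
    {x : ℝ} (hx : x ∈ Set.Icc (0 : ℝ) 1)
    {ρ₁ ρ₂ : Matrix m m ℂ} (hρ₁ : IsDensity ρ₁) (hρ₂ : IsDensity ρ₂) :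
    vnEntropy (x • ρ₁ + (1 - x) • ρ₂) - x * vnEntropy ρ₁ - (1 - x) * vnEntropy ρ₂
      ≤ binEntropy x := by
  have hsub := vnEntropy_add_le (hρ₁.1.smul hx.1) (hρ₂.1.smul (sub_nonneg.mpr hx.2))
  rw [vnEntropy_smul_of_isDensity hρ₁, vnEntropy_smul_of_isDensity hρ₂] at hsub
  rw [binEntropy_eq_negMulLog_add_negMulLog]
  linarith

theorem concavity_upper_bound_binEntropy (n : ℕ) (hn : 1 ≤ n) (x : ℝ)
    (hx : x ∈ Set.Ioo (0:ℝ) 1)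
    (ρ₁ ρ₂ : Matrix (Fin n) (Fin n) ℂ) (h1 : IsDensity ρ₁) (h2 : IsDensity ρ₂) :
    vnEntropy (x • ρ₁ + (1 - x) • ρ₂) - x * vnEntropy ρ₁ - (1 - x) * vnEntropy ρ₂
      ≤ binEntropy x :=
  concavity_upper_bound_binEntropy_general (Set.Ioo_subset_Icc_self hx) h1 h2
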